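/- Let Φ be a finite NCIFS with 0 < a₋ := liminf (1/n) log #I^(n) ≤ limsup (1/n) log #I^(n) =: a₊ < ∞ and 0 < b₋ := liminf (1/n) log(1/c̄_n) ≤ limsup (1/n) log(1/c̲_n) =: b₊ < ∞, where c̄_n and c̲_n are the maximal and minimal derivative norms at level n. If additionally Φ satisfies the hypotheses making Bowen's formula hold (e.g. it is weakly balanced), then a₋/b₊ ≤ HD(J(Φ)) ≤ a₊/b₋. -/

import Mathlib

open Metric Set Filter Topology MeasureTheory
open scoped ENNReal

noncomputable section

/-- A non-autonomous conformal iterated function system (NCIFS) on a compact subset `X` of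
`ℝ^d`, encoded via the composed maps `wMap m n ω` associated with finite words `ω` occupying
levels `m, m+1, …, n-1`, together with their conformal derivative norms `segN m n ω = ‖Dφ_ω‖`.
The fields record the standing assumptions: the open set condition, bounded distortion with
constant `K` (both for derivative norms of split words and as two-sided Lipschitz bounds),
and uniform contraction with constant `η < 1`. -/
structure NCIFS (d : ℕ) where
  X : Set (EuclideanSpace ℝ (Fin d))
  hX_compact : IsCompact X
  hX_nonempty : X.Nonempty
  hX_regular : closure (interior X) = X
  hX_convex : Convex ℝ X
  I : ℕ → Type
  hI_ne : ∀ n, Nonempty (I n)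
  K : ℝ
  hK : 1 ≤ K
  η : ℝ
  hη_pos : 0 < η
  hη_lt : η < 1
  /-- `segN m n ω` is the derivative norm `‖Dφ_ω‖` of the word `ω` on levels `m, …, n-1`. -/
  segN : (m n : ℕ) → ((j : Finset.Ico m n) → I j) → ℝ
  segN_pos : ∀ m n ω, 0 < segN m n ω
  /-- uniform contraction -/
  segN_contract : ∀ m n ω, segN m n ω ≤ η ^ (n - m)
  /-- submultiplicativity and bounded distortion for derivative norms of split words -/
  segN_split : ∀ m k n, m ≤ k → k ≤ n →
      ∀ (ω : (j : Finset.Ico m n) → I j) (ω₁ : (j : Finset.Ico m k) → I j)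
        (ω₂ : (j : Finset.Ico k n) → I j),
        (∀ (j : ℕ) (h₁ : j ∈ Finset.Ico m k) (h₂ : j ∈ Finset.Ico m n),
            ω₁ ⟨j, h₁⟩ = ω ⟨j, h₂⟩) →
        (∀ (j : ℕ) (h₁ : j ∈ Finset.Ico k n) (h₂ : j ∈ Finset.Ico m n),
            ω₂ ⟨j, h₁⟩ = ω ⟨j, h₂⟩) →
        segN m n ω ≤ segN m k ω₁ * segN k n ω₂ ∧
          segN m k ω₁ * segN k n ω₂ ≤ K * segN m n ω
  /-- the conformal contraction associated to the word `ω` on levels `m, …, n-1` -/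
  wMap : (m n : ℕ) → ((j : Finset.Ico m n) → I j) →
      EuclideanSpace ℝ (Fin d) → EuclideanSpace ℝ (Fin d)
  wMap_id : ∀ m (ω : (j : Finset.Ico m m) → I j) x, wMap m m ω x = x
  wMap_mapsTo : ∀ m n ω, MapsTo (wMap m n ω) X X
  /-- upper conformal bound: `φ_ω` is `‖Dφ_ω‖`-Lipschitz on `X` -/
  wMap_lip : ∀ m n ω, ∀ x ∈ X, ∀ y ∈ X,
      dist (wMap m n ω x) (wMap m n ω y) ≤ segN m n ω * dist x y
  /-- lower conformal bound (bounded distortion) -/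
  wMap_colip : ∀ m n ω, ∀ x ∈ X, ∀ y ∈ X,
      segN m n ω / K * dist x y ≤ dist (wMap m n ω x) (wMap m n ω y)
  /-- compatibility of the maps under splitting of words -/
  wMap_comp : ∀ m k n, m ≤ k → k ≤ n →
      ∀ (ω : (j : Finset.Ico m n) → I j) (ω₁ : (j : Finset.Ico m k) → I j)
        (ω₂ : (j : Finset.Ico k n) → I j),
        (∀ (j : ℕ) (h₁ : j ∈ Finset.Ico m k) (h₂ : j ∈ Finset.Ico m n),
            ω₁ ⟨j, h₁⟩ = ω ⟨j, h₂⟩) →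
        (∀ (j : ℕ) (h₁ : j ∈ Finset.Ico k n) (h₂ : j ∈ Finset.Ico m n),
            ω₂ ⟨j, h₁⟩ = ω ⟨j, h₂⟩) →
        ∀ x ∈ X, wMap m n ω x = wMap m k ω₁ (wMap k n ω₂ x)
  /-- the open set condition -/
  osc : ∀ n (a b : (j : Finset.Ico n (n+1)) → I j), a ≠ b →
      Disjoint (wMap n (n+1) a '' interior X) (wMap n (n+1) b '' interior X)

namespace NCIFS

variable {d : ℕ} (Φ : NCIFS d)

/-- Words occupying levels `m, …, n-1`. -/
abbrev Word (m n : ℕ) := (j : Finset.Ico m n) → Φ.I j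

instance (m n : ℕ) : Nonempty (Φ.Word m n) :=
  ⟨fun j => Classical.choice (Φ.hI_ne j)⟩

/-- The one-letter word at level `n` given by the index `i`. -/
def single (n : ℕ) (i : Φ.I n) : Φ.Word n (n+1) :=
  fun j => cast (congrArg Φ.I (show n = (j : ℕ) by
    have := Finset.mem_Ico.mp j.2; omega)) i

/-- `‖Dφ_i^{(n)}‖`, the derivative norm of the single map with index `i` at level `n`. -/
def Dnorm (n : ℕ) (i : Φ.I n) : ℝ := Φ.segN n (n+1) (Φ.single n i)

/-- The partition function `Z_n(t) = Σ_{ω ∈ I^n} ‖Dφ_ω‖^t`, valued in `[0,∞]`. -/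
def Z (n : ℕ) (t : ℝ) : ℝ≥0∞ := ∑' ω : Φ.Word 0 n, ENNReal.ofReal (Φ.segN 0 n ω ^ t)

/-- The lower pressure `P̲(t) = liminf (1/n) log Z_n(t)`, valued in `[-∞,∞]`. -/
def lowP (t : ℝ) : EReal :=
  liminf (fun n : ℕ => (Φ.Z n t).log * (((n : ℝ)⁻¹ : ℝ) : EReal)) atTop

/-- The upper pressure `P̄(t) = limsup (1/n) log Z_n(t)`. -/
def upP (t : ℝ) : EReal :=
  limsup (fun n : ℕ => (Φ.Z n t).log * (((n : ℝ)⁻¹ : ℝ) : EReal)) atTop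

/-- The Bowen dimension `B(Φ) = sup {t ≥ 0 : P̲(t) > 0}` (and `0` if there is no such `t`). -/
def Bdim : ℝ≥0∞ := ⨆ t : {t : ℝ // 0 ≤ t ∧ (0 : EReal) < Φ.lowP t}, ENNReal.ofReal t.1

/-- The limit set `J(Φ) = ⋂_n ⋃_{ω ∈ I^n} φ_ω(X)`. -/
def limitSet : Set (EuclideanSpace ℝ (Fin d)) :=
  ⋂ n, ⋃ ω : Φ.Word 0 n, Φ.wMap 0 n ω '' Φ.X

/-- The minimal derivative norm `c̲_n` at level `n`. -/
def cmin (n : ℕ) : ℝ := ⨅ i : Φ.I n, Φ.Dnorm n i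

/-- The maximal derivative norm `c̄_n` at level `n`. -/
def cmax (n : ℕ) : ℝ := ⨆ i : Φ.I n, Φ.Dnorm n i

/-- `ρ_n`, the maximal ratio of derivative norms at level `n`. -/
def ρ (n : ℕ) : ℝ := Φ.cmax n / Φ.cmin n

/-- The modified partition function
`Z̃_n(t) = Z_{n-1}(t) · (#I^{(n)})^{t/d} · c̲_n^t`. -/
def Zt (n : ℕ) (t : ℝ) : ℝ≥0∞ :=
  Φ.Z (n - 1) t * ENNReal.ofReal ((Nat.card (Φ.I n) : ℝ) ^ (t / (d : ℝ)) * Φ.cmin n ^ t)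

/-- `P̃(t) = liminf (1/n) log Z̃_n(t)`. -/
def tP (t : ℝ) : EReal :=
  liminf (fun n : ℕ => (Φ.Zt n t).log * (((n : ℝ)⁻¹ : ℝ) : EReal)) atTop

end NCIFS


namespace NCIFS

variable {d : ℕ} (Φ : NCIFS d)

/-- restriction of a sequence to a word -/
def res (σ : (n : ℕ) → Φ.I n) (m n : ℕ) : Φ.Word m n := fun j => σ j

lemma exists_res (m n : ℕ) (ω : Φ.Word m n) : ∃ σ, Φ.res σ m n = ω := by
  classical
  refine ⟨fun j => if h : j ∈ Finset.Ico m n then ω ⟨j, h⟩ else Classical.choice (Φ.hI_ne j), ?_⟩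
  funext j
  simp only [res]
  rw [dif_pos j.2]

lemma segN_nil (m : ℕ) (ω : Φ.Word m m) : Φ.segN m m ω = 1 := by
  have h := (Φ.segN_split m m m le_rfl le_rfl ω ω ω (fun _ _ _ => rfl) (fun _ _ _ => rfl)).1
  have h2 := Φ.segN_contract m m ω
  have h3 := Φ.segN_pos m m ω
  simp only [Nat.sub_self, pow_zero] at h2
  nlinarith

lemma res_single (σ : (n : ℕ) → Φ.I n) (n : ℕ) : Φ.res σ n (n+1) = Φ.single n (σ n) := by
  funext j
  obtain ⟨j, hj⟩ := j
  have : j = n := by have := Finset.mem_Ico.mp hj; omega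
  subst this
  simp [res, single]

lemma split_res (σ : (n : ℕ) → Φ.I n) {m k n : ℕ} (h1 : m ≤ k) (h2 : k ≤ n) :
    Φ.segN m n (Φ.res σ m n) ≤ Φ.segN m k (Φ.res σ m k) * Φ.segN k n (Φ.res σ k n) ∧
    Φ.segN m k (Φ.res σ m k) * Φ.segN k n (Φ.res σ k n) ≤ Φ.K * Φ.segN m n (Φ.res σ m n) :=
  Φ.segN_split m k n h1 h2 _ _ _ (fun _ _ _ => rfl) (fun _ _ _ => rfl)

lemma comp_res (σ : (n : ℕ) → Φ.I n) {m k n : ℕ} (h1 : m ≤ k) (h2 : k ≤ n) :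
    ∀ x ∈ Φ.X, Φ.wMap m n (Φ.res σ m n) x
      = Φ.wMap m k (Φ.res σ m k) (Φ.wMap k n (Φ.res σ k n) x) :=
  Φ.wMap_comp m k n h1 h2 _ _ _ (fun _ _ _ => rfl) (fun _ _ _ => rfl)

lemma image_res_subset (σ : (n : ℕ) → Φ.I n) {m k n : ℕ} (h1 : m ≤ k) (h2 : k ≤ n) :
    Φ.wMap m n (Φ.res σ m n) '' Φ.X ⊆
      Φ.wMap m k (Φ.res σ m k) '' (Φ.wMap k n (Φ.res σ k n) '' Φ.X) := by
  rintro _ ⟨x, hx, rfl⟩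
  rw [Φ.comp_res σ h1 h2 x hx]
  exact mem_image_of_mem _ (mem_image_of_mem _ hx)

lemma Kpos : 0 < Φ.K := lt_of_lt_of_le one_pos Φ.hK

lemma lipOn (m n : ℕ) (ω : Φ.Word m n) :
    LipschitzOnWith (Real.toNNReal (Φ.segN m n ω)) (Φ.wMap m n ω) Φ.X := by
  apply LipschitzOnWith.of_dist_le_mul
  intro x hx y hy
  rw [Real.coe_toNNReal _ (Φ.segN_pos m n ω).le]
  exact Φ.wMap_lip m n ω x hx y hy

lemma injOn (m n : ℕ) (ω : Φ.Word m n) : InjOn (Φ.wMap m n ω) Φ.X := by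
  intro x hx y hy h
  have := Φ.wMap_colip m n ω x hx y hy
  rw [h, dist_self] at this
  have hp : 0 < Φ.segN m n ω / Φ.K := div_pos (Φ.segN_pos m n ω) Φ.Kpos
  have h0 : dist x y ≤ 0 := by
    by_contra hc
    push Not at hc
    nlinarith [mul_pos hp hc]
  exact dist_le_zero.mp h0

lemma image_compact (m n : ℕ) (ω : Φ.Word m n) : IsCompact (Φ.wMap m n ω '' Φ.X) :=
  Φ.hX_compact.image_of_continuousOn (Φ.lipOn m n ω).continuousOn

/-- The reference Haar measure. -/
def hm (d : ℕ) : Measure (EuclideanSpace ℝ (Fin d)) := Measure.hausdorffMeasure (d : ℝ)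

instance : Measure.IsAddHaarMeasure (hm d) := by
  have h := isAddHaarMeasure_hausdorffMeasure (E := EuclideanSpace ℝ (Fin d))
  rw [finrank_euclideanSpace_fin] at h
  exact h

lemma null_image (m n : ℕ) (ω : Φ.Word m n) {s : Set (EuclideanSpace ℝ (Fin d))}
    (hs : s ⊆ Φ.X) (h0 : hm d s = 0) : hm d (Φ.wMap m n ω '' s) = 0 := by
  have := ((Φ.lipOn m n ω).mono hs).hausdorffMeasure_image_le (d := (d : ℝ)) (by positivity)
  change hm d _ ≤ _ * hm d s at this
  rw [h0, mul_zero] at this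
  exact le_antisymm this bot_le

lemma vol_image (m n : ℕ) (ω : Φ.Word m n) :
    hm d Φ.X ≤ ENNReal.ofReal ((Φ.K / Φ.segN m n ω) ^ d) * hm d (Φ.wMap m n ω '' Φ.X) := by
  have hinj := Φ.injOn m n ω
  have hp : 0 < Φ.K / Φ.segN m n ω := div_pos Φ.Kpos (Φ.segN_pos m n ω)
  have hl : LipschitzOnWith (Real.toNNReal (Φ.K / Φ.segN m n ω))
      (Function.invFunOn (Φ.wMap m n ω) Φ.X) (Φ.wMap m n ω '' Φ.X) := by
    apply LipschitzOnWith.of_dist_le_mul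
    rintro _ ⟨x, hx, rfl⟩ _ ⟨y, hy, rfl⟩
    rw [hinj.leftInvOn_invFunOn hx, hinj.leftInvOn_invFunOn hy, Real.coe_toNNReal _ hp.le]
    have := Φ.wMap_colip m n ω x hx y hy
    have hs := Φ.segN_pos m n ω
    have hK := Φ.Kpos
    calc dist x y = Φ.K / Φ.segN m n ω * (Φ.segN m n ω / Φ.K * dist x y) := by
          field_simp
      _ ≤ _ := by gcongr
  have := hl.hausdorffMeasure_image_le (d := (d : ℝ)) (by positivity)
  rw [hinj.leftInvOn_invFunOn.image_image] at this
  change hm d _ ≤ _ * hm d _ at this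
  refine this.trans_eq ?_
  congr 1
  rw [ENNReal.rpow_natCast, ENNReal.ofReal_pow hp.le]
  rfl

lemma vol_X_pos : 0 < hm d Φ.X := by
  have hne : (interior Φ.X).Nonempty := by
    by_contra h
    rw [not_nonempty_iff_eq_empty] at h
    have h2 := Φ.hX_regular
    rw [h, closure_empty] at h2
    exact Φ.hX_nonempty.ne_empty h2.symm
  exact (isOpen_interior.measure_pos (hm d) hne).trans_le (measure_mono interior_subset)

lemma aedisj_one (n : ℕ) (a b : Φ.Word n (n+1)) (hab : a ≠ b) :
    hm d (Φ.wMap n (n+1) a '' Φ.X ∩ Φ.wMap n (n+1) b '' Φ.X) = 0 := by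
  have hcl : IsClosed Φ.X := Φ.hX_compact.isClosed
  have hfr : frontier Φ.X ⊆ Φ.X := hcl.frontier_subset
  have h0 : hm d (frontier Φ.X) = 0 := Φ.hX_convex.addHaar_frontier (hm d)
  have hX : ∀ x ∈ Φ.X, x ∈ interior Φ.X ∨ x ∈ frontier Φ.X := by
    intro x hx
    by_cases h : x ∈ interior Φ.X
    · exact Or.inl h
    · right; rw [hcl.frontier_eq]; exact ⟨hx, h⟩
  have hsub : Φ.wMap n (n+1) a '' Φ.X ∩ Φ.wMap n (n+1) b '' Φ.X ⊆
      Φ.wMap n (n+1) a '' frontier Φ.X ∪ Φ.wMap n (n+1) b '' frontier Φ.X := by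
    rintro z ⟨⟨x, hx, hxz⟩, ⟨y, hy, hyz⟩⟩
    rcases hX x hx with h1 | h1
    · rcases hX y hy with h2 | h2
      · exact absurd (⟨y, h2, hyz⟩ : z ∈ Φ.wMap n (n+1) b '' interior Φ.X)
          (disjoint_left.mp (Φ.osc n a b hab) ⟨x, h1, hxz⟩)
      · exact Or.inr ⟨y, h2, hyz⟩
    · exact Or.inl ⟨x, h1, hxz⟩
  refine measure_mono_null hsub (measure_union_null ?_ ?_)
  · exact Φ.null_image _ _ _ hfr h0
  · exact Φ.null_image _ _ _ hfr h0

lemma aedisj (n : ℕ) (ω τ : Φ.Word 0 n) (h : ω ≠ τ) :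
    hm d (Φ.wMap 0 n ω '' Φ.X ∩ Φ.wMap 0 n τ '' Φ.X) = 0 := by
  classical
  obtain ⟨σ, rfl⟩ := Φ.exists_res 0 n ω
  obtain ⟨ξ, rfl⟩ := Φ.exists_res 0 n τ
  have hex : ∃ k, k < n ∧ σ k ≠ ξ k := by
    by_contra hc
    push Not at hc
    apply h
    funext j
    exact hc j (Finset.mem_Ico.mp j.2).2
  obtain ⟨hk, hne⟩ := Nat.find_spec hex
  set k := Nat.find hex
  have hlt : ∀ j < k, σ j = ξ j := by
    intro j hj
    have := Nat.find_min hex hj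
    push Not at this
    exact this (hj.trans hk)
  have hpre : Φ.res σ 0 k = Φ.res ξ 0 k := by
    funext j
    exact hlt j (Finset.mem_Ico.mp j.2).2
  have hne' : Φ.res σ k (k+1) ≠ Φ.res ξ k (k+1) := by
    intro he
    exact hne (congrFun he ⟨k, by simp⟩)
  have sub : ∀ ζ, Φ.wMap 0 n (Φ.res ζ 0 n) '' Φ.X ⊆
      Φ.wMap 0 k (Φ.res ζ 0 k) '' (Φ.wMap k (k+1) (Φ.res ζ k (k+1)) '' Φ.X) := by
    intro ζ
    refine (Φ.image_res_subset ζ (Nat.zero_le k) hk.le).trans (image_mono ?_)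
    refine (Φ.image_res_subset ζ (Nat.le_succ k) hk).trans (image_mono ?_)
    exact (Φ.wMap_mapsTo _ _ _).image_subset
  refine measure_mono_null (inter_subset_inter (sub σ) (sub ξ)) ?_
  rw [← hpre, ← (Φ.injOn 0 k (Φ.res σ 0 k)).image_inter (Φ.wMap_mapsTo _ _ _).image_subset
    (Φ.wMap_mapsTo _ _ _).image_subset]
  apply Φ.null_image
  · exact inter_subset_left.trans (Φ.wMap_mapsTo _ _ _).image_subset
  · exact Φ.aedisj_one k _ _ hne'

end NCIFS

namespace NCIFS

variable {d : ℕ} (Φ : NCIFS d)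

lemma Dnorm_pos (n : ℕ) (i : Φ.I n) : 0 < Φ.Dnorm n i := Φ.segN_pos _ _ _

lemma Dnorm_le_eta (n : ℕ) (i : Φ.I n) : Φ.Dnorm n i ≤ Φ.η := by
  have := Φ.segN_contract n (n+1) (Φ.single n i)
  simpa [Dnorm] using this

lemma le_cmax [∀ n, Finite (Φ.I n)] (n : ℕ) (i : Φ.I n) : Φ.Dnorm n i ≤ Φ.cmax n :=
  le_ciSup (f := fun i => Φ.Dnorm n i) (Set.finite_range _).bddAbove i

lemma cmin_le [∀ n, Finite (Φ.I n)] (n : ℕ) (i : Φ.I n) : Φ.cmin n ≤ Φ.Dnorm n i :=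
  ciInf_le (f := fun i => Φ.Dnorm n i) (Set.finite_range _).bddBelow i

lemma cmin_pos [∀ n, Finite (Φ.I n)] (n : ℕ) : 0 < Φ.cmin n := by
  have := Φ.hI_ne n
  obtain ⟨i, hi⟩ := Finite.exists_min (fun i => Φ.Dnorm n i)
  exact (Φ.Dnorm_pos n i).trans_le (le_ciInf hi)

lemma cmin_le_cmax [∀ n, Finite (Φ.I n)] (n : ℕ) : Φ.cmin n ≤ Φ.cmax n := by
  obtain ⟨i⟩ := Φ.hI_ne n
  exact (Φ.cmin_le n i).trans (Φ.le_cmax n i)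

lemma cmax_pos [∀ n, Finite (Φ.I n)] (n : ℕ) : 0 < Φ.cmax n :=
  (Φ.cmin_pos n).trans_le (Φ.cmin_le_cmax n)

lemma cmax_le_eta (n : ℕ) : Φ.cmax n ≤ Φ.η := by
  have := Φ.hI_ne n
  exact ciSup_le (Φ.Dnorm_le_eta n)

/-- product of maximal norms -/
def Lu (n : ℕ) : ℝ := ∏ j ∈ Finset.range n, Φ.cmax j

/-- product of (distorted) minimal norms -/
def Ll (n : ℕ) : ℝ := ∏ j ∈ Finset.range n, (Φ.cmin j / Φ.K)

/-- number of words -/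
def Nw (n : ℕ) : ℝ := ∏ j ∈ Finset.range n, (Nat.card (Φ.I j) : ℝ)

variable [∀ n, Finite (Φ.I n)]

lemma card_pos (n : ℕ) : (0 : ℝ) < Nat.card (Φ.I n) := by
  have := Φ.hI_ne n
  exact_mod_cast Nat.card_pos

lemma Lu_pos (n : ℕ) : 0 < Φ.Lu n := Finset.prod_pos fun j _ => Φ.cmax_pos j
lemma Ll_pos (n : ℕ) : 0 < Φ.Ll n := Finset.prod_pos fun j _ => div_pos (Φ.cmin_pos j) Φ.Kpos
lemma Nw_pos (n : ℕ) : 0 < Φ.Nw n := Finset.prod_pos fun j _ => Φ.card_pos j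

lemma Lu_le (n : ℕ) : Φ.Lu n ≤ Φ.η ^ n := by
  have := Finset.prod_le_prod (s := Finset.range n) (fun j _ => (Φ.cmax_pos j).le)
    (fun j _ => Φ.cmax_le_eta j)
  simpa [Lu] using this

lemma Lu_tendsto : Tendsto Φ.Lu atTop (𝓝 0) :=
  squeeze_zero (fun n => (Φ.Lu_pos n).le) Φ.Lu_le
    (tendsto_pow_atTop_nhds_zero_of_lt_one Φ.hη_pos.le Φ.hη_lt)

lemma segN_bounds (σ : (n : ℕ) → Φ.I n) (n : ℕ) :
    Φ.Ll n ≤ Φ.segN 0 n (Φ.res σ 0 n) ∧ Φ.segN 0 n (Φ.res σ 0 n) ≤ Φ.Lu n := by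
  induction n with
  | zero => simp [Ll, Lu, segN_nil]
  | succ n ih =>
    obtain ⟨h1, h2⟩ := Φ.split_res σ (Nat.zero_le n) (Nat.le_succ n)
    rw [Φ.res_single σ n] at h1 h2
    change _ ≤ _ * Φ.Dnorm n (σ n) at h1
    change _ * Φ.Dnorm n (σ n) ≤ _ at h2
    have hp := Φ.segN_pos 0 n (Φ.res σ 0 n)
    have hK := Φ.Kpos
    constructor
    · rw [Ll, Finset.prod_range_succ, ← Ll, ← mul_div_assoc, div_le_iff₀ hK]
      calc _ ≤ Φ.segN 0 n (Φ.res σ 0 n) * Φ.Dnorm n (σ n) := by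
            apply mul_le_mul ih.1 (Φ.cmin_le n _) (Φ.cmin_pos n).le hp.le
        _ ≤ _ := by rw [mul_comm _ Φ.K]; exact h2
    · rw [Lu, Finset.prod_range_succ, ← Lu]
      exact h1.trans (mul_le_mul ih.2 (Φ.le_cmax n _) (Φ.Dnorm_pos n _).le (Φ.Lu_pos n).le)

lemma card_word (n : ℕ) : (Nat.card (Φ.Word 0 n) : ℝ) = Φ.Nw n := by
  rw [Nat.card_pi, Nw]
  push_cast
  rw [Finset.prod_coe_sort (Finset.Ico 0 n) (fun j => (Nat.card (Φ.I j) : ℝ))]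
  simp

lemma dist_image_le (n : ℕ) (ω : Φ.Word 0 n) {x y : EuclideanSpace ℝ (Fin d)}
    (hx : x ∈ Φ.wMap 0 n ω '' Φ.X) (hy : y ∈ Φ.wMap 0 n ω '' Φ.X) :
    dist x y ≤ diam Φ.X * Φ.Lu n := by
  obtain ⟨σ, rfl⟩ := Φ.exists_res 0 n ω
  obtain ⟨x, hx, rfl⟩ := hx
  obtain ⟨y, hy, rfl⟩ := hy
  rw [mul_comm]
  exact (Φ.wMap_lip 0 n _ x hx y hy).trans (mul_le_mul (Φ.segN_bounds σ n).2
    (dist_le_diam_of_mem Φ.hX_compact.isBounded hx hy) dist_nonneg (Φ.Lu_pos n).le)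

/-- the counting lemma -/
lemma count_le (n : ℕ) (r : ℝ) (hr : Φ.Lu n ≤ r) (x0 : EuclideanSpace ℝ (Fin d))
    (W : Finset (Φ.Word 0 n))
    (hW : ∀ ω ∈ W, ∃ y ∈ Φ.wMap 0 n ω '' Φ.X, dist y x0 ≤ r) :
    (W.card : ℝ) * (hm d Φ.X).toReal ≤
      (Φ.K / Φ.Ll n) ^ d * (((1 + diam Φ.X) * r) ^ d * (hm d (closedBall 0 1)).toReal) := by
  have hr0 : 0 < r := (Φ.Lu_pos n).trans_le hr
  have hR : 0 ≤ (1 + diam Φ.X) * r := by positivity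
  have hsub : (⋃ ω ∈ W, Φ.wMap 0 n ω '' Φ.X) ⊆ closedBall x0 ((1 + diam Φ.X) * r) := by
    intro z hz
    simp only [mem_iUnion] at hz
    obtain ⟨ω, hω, hz⟩ := hz
    obtain ⟨y, hy, hyr⟩ := hW ω hω
    have h1 := Φ.dist_image_le n ω hz hy
    have h2 : diam Φ.X * Φ.Lu n ≤ diam Φ.X * r := by gcongr
    have := dist_triangle z y x0
    rw [mem_closedBall]
    linarith
  have hm1 := measure_biUnion_finset₀ (μ := hm d) (s := W) (f := fun ω => Φ.wMap 0 n ω '' Φ.X)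
    (fun ω _ τ _ h => Φ.aedisj n ω τ h)
    (fun ω _ => (Φ.image_compact 0 n ω).isClosed.measurableSet.nullMeasurableSet)
  have hm2 : ∑ ω ∈ W, hm d (Φ.wMap 0 n ω '' Φ.X) ≤
      ENNReal.ofReal (((1 + diam Φ.X) * r) ^ d) * hm d (closedBall 0 1) := by
    rw [← hm1]
    refine (measure_mono hsub).trans_eq ?_
    rw [Measure.addHaar_closedBall' (hm d) x0 hR, finrank_euclideanSpace_fin]
  have hKL : 0 < Φ.K / Φ.Ll n := div_pos Φ.Kpos (Φ.Ll_pos n)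
  have hm3 : (W.card : ℝ≥0∞) * hm d Φ.X ≤ ENNReal.ofReal ((Φ.K / Φ.Ll n) ^ d) *
      (ENNReal.ofReal (((1 + diam Φ.X) * r) ^ d) * hm d (closedBall 0 1)) := by
    calc (W.card : ℝ≥0∞) * hm d Φ.X = ∑ ω ∈ W, hm d Φ.X := by simp
      _ ≤ ∑ ω ∈ W, ENNReal.ofReal ((Φ.K / Φ.Ll n) ^ d) * hm d (Φ.wMap 0 n ω '' Φ.X) := by
          refine Finset.sum_le_sum fun ω _ => (Φ.vol_image 0 n ω).trans ?_
          gcongr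
          · exact (div_pos Φ.Kpos (Φ.segN_pos _ _ _)).le
          · exact Φ.Kpos.le
          · exact Φ.Ll_pos n
          · obtain ⟨σ, rfl⟩ := Φ.exists_res 0 n ω
            exact (Φ.segN_bounds σ n).1
      _ = ENNReal.ofReal ((Φ.K / Φ.Ll n) ^ d) * ∑ ω ∈ W, hm d (Φ.wMap 0 n ω '' Φ.X) := by
          rw [Finset.mul_sum]
      _ ≤ _ := by gcongr
  have hfin : hm d (closedBall 0 1) ≠ ⊤ := (isCompact_closedBall _ _).measure_lt_top.ne
  have := ENNReal.toReal_mono (by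
    exact ENNReal.mul_ne_top ENNReal.ofReal_ne_top (ENNReal.mul_ne_top ENNReal.ofReal_ne_top hfin))
    hm3
  rw [ENNReal.toReal_mul, ENNReal.toReal_mul, ENNReal.toReal_mul, ENNReal.toReal_ofReal (by positivity),
    ENNReal.toReal_ofReal (by positivity), ENNReal.toReal_natCast] at this
  exact this

/-- coding map -/
lemma exists_code (σ : (n : ℕ) → Φ.I n) :
    (⋂ n, Φ.wMap 0 n (Φ.res σ 0 n) '' Φ.X).Nonempty := by
  apply IsCompact.nonempty_iInter_of_sequence_nonempty_isCompact_isClosed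
  · intro n
    refine (Φ.image_res_subset σ (Nat.zero_le n) (Nat.le_succ n)).trans (image_mono ?_)
    exact (Φ.wMap_mapsTo _ _ _).image_subset
  · exact fun n => Φ.hX_nonempty.image _
  · exact Φ.image_compact _ _ _
  · exact fun n => (Φ.image_compact _ _ _).isClosed

def code (σ : (n : ℕ) → Φ.I n) : EuclideanSpace ℝ (Fin d) := (Φ.exists_code σ).some

lemma code_mem (σ : (n : ℕ) → Φ.I n) (n : ℕ) :
    Φ.code σ ∈ Φ.wMap 0 n (Φ.res σ 0 n) '' Φ.X := mem_iInter.mp (Φ.exists_code σ).some_mem n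

lemma code_mem_limitSet (σ : (n : ℕ) → Φ.I n) : Φ.code σ ∈ Φ.limitSet :=
  mem_iInter.mpr fun n => mem_iUnion.mpr ⟨_, Φ.code_mem σ n⟩

lemma exists_mass : ∃ ν : OuterMeasure (EuclideanSpace ℝ (Fin d)), 1 ≤ ν Φ.limitSet ∧
    ∀ (n : ℕ) (s : Set (EuclideanSpace ℝ (Fin d))), ∃ W : Finset (Φ.Word 0 n),
      (∀ ω ∈ W, ∃ y ∈ Φ.wMap 0 n ω '' Φ.X, y ∈ s) ∧
      ν s ≤ ENNReal.ofReal (W.card / Φ.Nw n) := by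
  classical
  let : ∀ n, MeasurableSpace (Φ.I n) := fun n => ⊤
  have : ∀ n, MeasurableSingletonClass (Φ.I n) := fun n => ⟨fun _ => trivial⟩
  have := Φ.hI_ne
  let := fun n => Fintype.ofFinite (Φ.I n)
  let P : Measure ((n : ℕ) → Φ.I n) :=
    Measure.infinitePi fun n => ProbabilityTheory.uniformOn (Set.univ : Set (Φ.I n))
  have hP : IsProbabilityMeasure P := by infer_instance
  have hcyl : ∀ n (ω : Φ.Word 0 n), P {σ | Φ.res σ 0 n = ω} ≤ ENNReal.ofReal (1 / Φ.Nw n) := by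
    intro n ω
    obtain ⟨ξ, rfl⟩ := Φ.exists_res 0 n ω
    have hsub : {σ | Φ.res σ 0 n = Φ.res ξ 0 n} ⊆
        Set.pi (Finset.range n : Set ℕ) (fun j => {ξ j}) := by
      intro σ hσ j hj
      simp only [Finset.coe_range, mem_Iio] at hj
      exact congrFun hσ ⟨j, by simpa using hj⟩
    refine (measure_mono hsub).trans_eq ?_
    rw [Measure.infinitePi_pi _ (fun i _ => measurableSet_singleton _)]
    rw [one_div, Nw, ← Finset.prod_inv_distrib, ENNReal.ofReal_prod_of_nonneg
      (fun j _ => by positivity)]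
    refine Finset.prod_congr rfl fun j _ => ?_
    rw [ProbabilityTheory.uniformOn_univ, Measure.count_singleton, one_div,
      ENNReal.ofReal_inv_of_pos (Φ.card_pos j), ENNReal.ofReal_natCast, Nat.card_eq_fintype_card]
  refine ⟨OuterMeasure.map Φ.code P.toOuterMeasure, ?_, ?_⟩
  · rw [OuterMeasure.map_apply]
    have : Φ.code ⁻¹' Φ.limitSet = univ := eq_univ_of_forall Φ.code_mem_limitSet
    rw [this]
    exact (measure_univ (μ := P)).ge
  · intro n s
    have : Fintype (Φ.Word 0 n) := Fintype.ofFinite _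
    refine ⟨Finset.univ.filter fun ω => ∃ y ∈ Φ.wMap 0 n ω '' Φ.X, y ∈ s, by simp, ?_⟩
    set W : Finset (Φ.Word 0 n) := Finset.univ.filter fun ω => ∃ y ∈ Φ.wMap 0 n ω '' Φ.X, y ∈ s
      with hWdef
    rw [OuterMeasure.map_apply]
    have hsub : Φ.code ⁻¹' s ⊆ ⋃ ω ∈ W, {σ | Φ.res σ 0 n = ω} := by
      intro σ hσ
      refine mem_iUnion₂.mpr ⟨Φ.res σ 0 n, ?_, rfl⟩
      rw [hWdef, Finset.mem_filter]
      exact ⟨Finset.mem_univ _, _, Φ.code_mem σ n, hσ⟩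
    change P _ ≤ _
    calc P (Φ.code ⁻¹' s) ≤ ∑ ω ∈ W, P {σ | Φ.res σ 0 n = ω} :=
          (measure_mono hsub).trans (measure_biUnion_finset_le _ _)
      _ ≤ ∑ ω ∈ W, ENNReal.ofReal (1 / Φ.Nw n) := Finset.sum_le_sum fun ω _ => hcyl n ω
      _ = ENNReal.ofReal (W.card / Φ.Nw n) := by
          rw [Finset.sum_const, nsmul_eq_mul, div_eq_mul_one_div (W.card : ℝ),
            ENNReal.ofReal_mul (by positivity), ENNReal.ofReal_natCast]

end NCIFS

namespace NCIFS

lemma tendsto_sum_of_tendsto (u : ℕ → ℝ) (hu : Tendsto u atTop atTop) :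
    Tendsto (fun n => ∑ j ∈ Finset.range n, u j) atTop atTop := by
  obtain ⟨N, hN⟩ := eventually_atTop.mp (hu.eventually_ge_atTop 1)
  have key : ∀ n ≥ N, (n : ℝ) + (∑ j ∈ Finset.range N, u j - N) ≤ ∑ j ∈ Finset.range n, u j := by
    intro n hn
    induction n, hn using Nat.le_induction with
    | base => linarith
    | succ n hn ih =>
      rw [Finset.sum_range_succ]
      have := hN n hn
      push_cast
      linarith
  refine tendsto_atTop_mono' atTop (eventually_atTop.mpr ⟨N, key⟩) ?_
  exact tendsto_atTop_add_const_right _ _ tendsto_natCast_atTop_atTop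

lemma tendsto_of_linear (u : ℕ → ℝ) (c : ℝ) (hc : 0 < c) (hu : ∀ᶠ j : ℕ in atTop, c * j ≤ u j) :
    Tendsto u atTop atTop :=
  tendsto_atTop_mono' atTop hu (tendsto_natCast_atTop_atTop.const_mul_atTop hc)

variable {d : ℕ} (Φ : NCIFS d) [∀ n, Finite (Φ.I n)]

lemma log_Lu (n : ℕ) : Real.log (Φ.Lu n) = - ∑ j ∈ Finset.range n, Real.log (1 / Φ.cmax j) := by
  rw [Lu, Real.log_prod (fun j _ => (Φ.cmax_pos j).ne'), ← Finset.sum_neg_distrib]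
  refine Finset.sum_congr rfl fun j _ => ?_
  rw [one_div, Real.log_inv, neg_neg]

lemma log_Ll (n : ℕ) : Real.log (Φ.Ll n) = - ∑ j ∈ Finset.range n,
    (Real.log (1 / Φ.cmax j) + Real.log (Φ.ρ j) + Real.log Φ.K) := by
  rw [Ll, Real.log_prod (fun j _ => (div_pos (Φ.cmin_pos j) Φ.Kpos).ne'),
    ← Finset.sum_neg_distrib]
  refine Finset.sum_congr rfl fun j _ => ?_
  rw [ρ, one_div, Real.log_inv, Real.log_div (Φ.cmin_pos j).ne' Φ.Kpos.ne',
    Real.log_div (Φ.cmax_pos j).ne' (Φ.cmin_pos j).ne']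
  ring

lemma log_Nw (n : ℕ) : Real.log (Φ.Nw n) =
    ∑ j ∈ Finset.range n, Real.log (Nat.card (Φ.I j)) := by
  rw [Nw, Real.log_prod (fun j _ => (Φ.card_pos j).ne')]

lemma log_inv_cmax_nonneg (n : ℕ) : 0 ≤ Real.log (1 / Φ.cmax n) := by
  rw [one_div, Real.log_inv]
  have := Real.log_nonpos (Φ.cmax_pos n).le ((Φ.cmax_le_eta n).trans Φ.hη_lt.le)
  linarith

lemma log_cmax_le_cmin (n : ℕ) : Real.log (1 / Φ.cmax n) ≤ Real.log (1 / Φ.cmin n) := by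
  rw [one_div, Real.log_inv, one_div, Real.log_inv]
  have := Real.log_le_log (Φ.cmin_pos n) (Φ.cmin_le_cmax n)
  linarith

lemma upper_aux (t : ℝ) (ht : 0 ≤ t)
    (hu : Tendsto (fun j => t * Real.log (1 / Φ.cmax j) - Real.log (Nat.card (Φ.I j)))
      atTop atTop) :
    Measure.hausdorffMeasure t Φ.limitSet = 0 := by
  have h1 := Real.tendsto_exp_neg_atTop_nhds_zero.comp (tendsto_sum_of_tendsto _ hu)
  have h2 : Tendsto (fun n => Φ.Nw n * (diam Φ.X * Φ.Lu n) ^ t) atTop (𝓝 0) := by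
    have h3 := h1.const_mul (diam Φ.X ^ t)
    rw [mul_zero] at h3
    refine h3.congr fun n => ?_
    rw [Real.mul_rpow diam_nonneg (Φ.Lu_pos n).le, Real.rpow_def_of_pos (Φ.Lu_pos n), log_Lu]
    rw [← Real.exp_log (Φ.Nw_pos n)]
    rw [log_Nw, mul_left_comm, ← Real.exp_add]
    simp only [Function.comp_apply]
    congr 2
    rw [Finset.sum_sub_distrib, ← Finset.mul_sum]
    ring
  have := fun n => Fintype.ofFinite (Φ.Word 0 n)
  have hD : ∀ n, 0 ≤ diam Φ.X * Φ.Lu n := fun n => mul_nonneg diam_nonneg (Φ.Lu_pos n).le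
  have h3 := Measure.hausdorffMeasure_le_liminf_sum t Φ.limitSet (l := atTop)
    (fun n : ℕ => ENNReal.ofReal (diam Φ.X * Φ.Lu n))
    (by
      have := ENNReal.tendsto_ofReal (Φ.Lu_tendsto.const_mul (diam Φ.X))
      simpa using this)
    (fun (n : ℕ) (ω : Φ.Word 0 n) => Φ.wMap 0 n ω '' Φ.X)
    (Eventually.of_forall fun n ω => ediam_le_of_forall_dist_le fun x hx y hy =>
      Φ.dist_image_le n ω hx hy)
    (Eventually.of_forall fun n => iInter_subset _ n)
  have h4 : Tendsto (fun n => ∑ ω : Φ.Word 0 n, ediam (Φ.wMap 0 n ω '' Φ.X) ^ t) atTop (𝓝 0) := by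
    have h5 := ENNReal.tendsto_ofReal h2
    rw [ENNReal.ofReal_zero] at h5
    refine tendsto_of_tendsto_of_tendsto_of_le_of_le tendsto_const_nhds h5 (fun n => bot_le) ?_
    intro n
    calc ∑ ω : Φ.Word 0 n, ediam (Φ.wMap 0 n ω '' Φ.X) ^ t
        ≤ ∑ ω : Φ.Word 0 n, ENNReal.ofReal (diam Φ.X * Φ.Lu n) ^ t := by
          refine Finset.sum_le_sum fun ω _ => ENNReal.rpow_le_rpow ?_ ht
          exact ediam_le_of_forall_dist_le fun x hx y hy => Φ.dist_image_le n ω hx hy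
      _ = ENNReal.ofReal (Φ.Nw n * (diam Φ.X * Φ.Lu n) ^ t) := by
          rw [Finset.sum_const, nsmul_eq_mul, ENNReal.ofReal_mul (Φ.Nw_pos n).le,
            ENNReal.ofReal_rpow_of_nonneg (hD n) ht, ← card_word, ENNReal.ofReal_natCast,
            Nat.card_eq_fintype_card]
          rfl
  rw [h4.liminf_eq] at h3
  exact le_antisymm h3 bot_le

lemma lower_num (s B C0 : ℝ) (hB0 : 0 ≤ B) (hC0 : 0 < C0)
    (hB : ∀ᶠ j : ℕ in atTop, Real.log (1 / Φ.cmax j) ≤ B * j)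
    (hu : Tendsto (fun j => Real.log (Nat.card (Φ.I j)) - s * Real.log (1 / Φ.cmax j)
      - d * Real.log (Φ.ρ j)) atTop atTop) :
    ∀ᶠ k in atTop, C0 * (Φ.Lu k / Φ.Ll (k+1)) ^ d / Φ.Nw (k+1) ≤ Φ.Lu (k+1) ^ s := by
  have h1 := tendsto_sum_of_tendsto _
    (tendsto_atTop_add_const_right _ (-(d * Real.log Φ.K + d * B)) hu)
  have h2 := ((tendsto_add_atTop_iff_nat 1).mpr h1).eventually_ge_atTop (Real.log C0)
  filter_upwards [hB, h2] with k hk1 hk2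
  have p1 := Φ.Lu_pos k
  have p2 := Φ.Lu_pos (k+1)
  have p3 := Φ.Ll_pos (k+1)
  have p4 := Φ.Nw_pos (k+1)
  rw [← Real.log_le_log_iff (by positivity) (by positivity), Real.log_rpow p2,
    Real.log_div (by positivity) p4.ne', Real.log_mul hC0.ne' (by positivity), Real.log_pow,
    Real.log_div p1.ne' p3.ne']
  have e1 : Real.log (Φ.Lu k) = Real.log (Φ.Lu (k+1)) + Real.log (1 / Φ.cmax k) := by
    rw [log_Lu, log_Lu, Finset.sum_range_succ]; ring
  rw [e1, log_Lu, log_Ll, log_Nw]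
  simp only [Finset.sum_add_distrib, Finset.sum_sub_distrib, Finset.sum_const, Finset.card_range,
    nsmul_eq_mul, ← Finset.mul_sum] at hk2 ⊢
  push_cast at hk2 ⊢
  have hd : (0 : ℝ) ≤ d := by positivity
  have h5 := mul_le_mul_of_nonneg_left hk1 hd
  have h6 : 0 ≤ (d : ℝ) * B := by positivity
  nlinarith

lemma exists_scale (k0 : ℕ) (r : ℝ) (hr0 : 0 < r) (hr : r ≤ Φ.Lu k0) :
    ∃ k ≥ k0, Φ.Lu (k+1) ≤ r ∧ r ≤ Φ.Lu k := by
  classical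
  have hex : ∃ m, Φ.Lu (k0 + 1 + m) ≤ r := by
    obtain ⟨N, hN⟩ := eventually_atTop.mp (Φ.Lu_tendsto.eventually (ge_mem_nhds hr0))
    exact ⟨N, hN _ (by omega)⟩
  have hs := Nat.find_spec hex
  rcases h : Nat.find hex with _ | m
  · rw [h] at hs
    exact ⟨k0, le_rfl, hs, hr⟩
  · rw [h] at hs
    refine ⟨k0 + 1 + m, by omega, hs, ?_⟩
    have := Nat.find_min hex (m := m) (by omega)
    exact (not_le.mp this).le

lemma lower_aux (s B : ℝ) (hs : 0 ≤ s) (hB0 : 0 ≤ B)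
    (hB : ∀ᶠ j : ℕ in atTop, Real.log (1 / Φ.cmax j) ≤ B * j)
    (hu : Tendsto (fun j => Real.log (Nat.card (Φ.I j)) - s * Real.log (1 / Φ.cmax j)
      - d * Real.log (Φ.ρ j)) atTop atTop) :
    Measure.hausdorffMeasure s Φ.limitSet ≠ 0 := by
  obtain ⟨ν, hν1, hν⟩ := Φ.exists_mass
  set v := (hm d Φ.X).toReal with hv
  set b := (hm d (closedBall (0 : EuclideanSpace ℝ (Fin d)) 1)).toReal with hb
  have hvpos : 0 < v := ENNReal.toReal_pos Φ.vol_X_pos.ne' Φ.hX_compact.measure_lt_top.ne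
  have hbpos : 0 < b := ENNReal.toReal_pos (measure_closedBall_pos _ _ one_pos).ne'
    (isCompact_closedBall _ _).measure_lt_top.ne
  have hK := Φ.Kpos
  have hD : 0 ≤ diam Φ.X := diam_nonneg
  set C0 := (Φ.K * (1 + diam Φ.X)) ^ d * b / v with hC0
  have hC0pos : 0 < C0 := by positivity
  obtain ⟨k0, hk0⟩ := eventually_atTop.mp (Φ.lower_num s B C0 hB0 hC0pos hB hu)
  have key : ∀ (S : Set (EuclideanSpace ℝ (Fin d))) (r : ℝ), 0 < r → r ≤ Φ.Lu k0 →
      ediam S ≤ ENNReal.ofReal r → ν S ≤ ENNReal.ofReal (r ^ s) := by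
    intro S r hr0 hr hS
    rcases S.eq_empty_or_nonempty with rfl | ⟨x0, hx0⟩
    · simp
    obtain ⟨k, hk, hk1, hk2⟩ := Φ.exists_scale k0 r hr0 hr
    obtain ⟨W, hW, hνW⟩ := hν (k+1) S
    refine hνW.trans (ENNReal.ofReal_le_ofReal ?_)
    have hcount := Φ.count_le (k+1) r hk1 x0 W (fun ω hω => by
      obtain ⟨y, hy, hyS⟩ := hW ω hω
      refine ⟨y, hy, ?_⟩
      have := (edist_le_ediam_of_mem hyS hx0).trans hS
      rw [edist_dist] at this
      exact (ENNReal.ofReal_le_ofReal_iff hr0.le).mp this)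
    have p3 := Φ.Ll_pos (k+1)
    have p4 := Φ.Nw_pos (k+1)
    have p2 := Φ.Lu_pos (k+1)
    calc (W.card : ℝ) / Φ.Nw (k+1) ≤ C0 * (r / Φ.Ll (k+1)) ^ d / Φ.Nw (k+1) := by
          gcongr
          have : C0 * (r / Φ.Ll (k+1)) ^ d =
              ((Φ.K / Φ.Ll (k+1)) ^ d * (((1 + diam Φ.X) * r) ^ d * b)) / v := by
            rw [hC0]
            simp only [div_pow, mul_pow]
            field_simp
          rw [this, le_div_iff₀ hvpos]
          exact hcount
      _ ≤ C0 * (Φ.Lu k / Φ.Ll (k+1)) ^ d / Φ.Nw (k+1) := by gcongr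
      _ ≤ Φ.Lu (k+1) ^ s := hk0 k hk
      _ ≤ r ^ s := Real.rpow_le_rpow p2.le hk1 hs
  have hle : ν ≤ OuterMeasure.mkMetric (fun r => r ^ s) := by
    refine OuterMeasure.le_mkMetric _ ν (ENNReal.ofReal (Φ.Lu k0))
      (ENNReal.ofReal_pos.mpr (Φ.Lu_pos k0)) ?_
    intro S hS
    have hfin : ediam S ≠ ⊤ := ne_top_of_le_ne_top ENNReal.ofReal_ne_top hS
    rcases eq_or_ne (ediam S) 0 with h0 | h0
    · rw [h0]
      have ht : Tendsto (fun r : ℝ => ENNReal.ofReal r ^ s) (𝓝[>] 0) (𝓝 ((0 : ℝ≥0∞) ^ s)) := by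
        have h1 : Tendsto (fun r : ℝ => ENNReal.ofReal r) (𝓝[>] 0) (𝓝 0) := by
          have := (ENNReal.continuous_ofReal.tendsto 0).mono_left
            (nhdsWithin_le_nhds (s := Ioi (0 : ℝ)))
          simpa using this
        exact ((ENNReal.continuous_rpow_const).tendsto 0).comp h1
      refine ge_of_tendsto ht ?_
      filter_upwards [Ioc_mem_nhdsGT (Φ.Lu_pos k0)] with r hr
      rw [ENNReal.ofReal_rpow_of_nonneg hr.1.le hs]
      exact key S r hr.1 hr.2 (by rw [h0]; exact bot_le)
    · have hpos := ENNReal.toReal_pos h0 hfin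
      have := key S (ediam S).toReal hpos (ENNReal.toReal_le_of_le_ofReal (Φ.Lu_pos k0).le hS)
        (ENNReal.ofReal_toReal hfin).ge
      rwa [← ENNReal.ofReal_rpow_of_nonneg hpos.le hs, ENNReal.ofReal_toReal hfin] at this
  have h1 := hν1.trans (hle Φ.limitSet)
  rw [← Measure.mkMetric_toOuterMeasure] at h1
  change 1 ≤ Measure.hausdorffMeasure s Φ.limitSet at h1
  exact (one_pos.trans_le h1).ne'

end NCIFS

/-- Suppose the finite NCIFS `Φ` satisfies
`0 < a₋ = liminf (1/n) log #I^{(n)} ≤ limsup (1/n) log #I^{(n)} = a₊ < ∞` and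
`0 < b₋ = liminf (1/n) log(1/c̄_n) ≤ limsup (1/n) log(1/c̲_n) = b₊ < ∞`, and is weakly
balanced (so that Bowen's formula holds). Then `a₋/b₊ ≤ HD(J(Φ)) ≤ a₊/b₋`. -/
theorem NCIFS.dimH_between {d : ℕ} (Φ : NCIFS d) [∀ n, Finite (Φ.I n)]
    (hbal : Tendsto (fun n : ℕ => Real.log (Φ.ρ n) / n) atTop (𝓝 0))
    (am ap bm bp : ℝ) (ham : 0 < am) (hbm : 0 < bm)
    (hlam : liminf (fun n : ℕ => Real.log (Nat.card (Φ.I n)) / n) atTop = am)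
    (hlap : limsup (fun n : ℕ => Real.log (Nat.card (Φ.I n)) / n) atTop = ap)
    (hlbm : liminf (fun n : ℕ => Real.log (1 / Φ.cmax n) / n) atTop = bm)
    (hlbp : limsup (fun n : ℕ => Real.log (1 / Φ.cmin n) / n) atTop = bp)
    (hbdda : IsBoundedUnder (· ≤ ·) atTop (fun n : ℕ => Real.log (Nat.card (Φ.I n)) / n))
    (hbddb : IsBoundedUnder (· ≤ ·) atTop (fun n : ℕ => Real.log (1 / Φ.cmin n) / n)) :
    ENNReal.ofReal (am / bp) ≤ dimH Φ.limitSet ∧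
      dimH Φ.limitSet ≤ ENNReal.ofReal (ap / bm) := by
  have ha_low : ∀ ε > 0, ∀ᶠ j : ℕ in atTop, (am - ε) * j ≤ Real.log (Nat.card (Φ.I j)) := by
    intro ε hε
    have h := eventually_lt_of_lt_liminf (b := am - ε) (by rw [hlam]; linarith)
      (isBoundedUnder_of ⟨0, fun n => div_nonneg (Real.log_natCast_nonneg _) (Nat.cast_nonneg n)⟩)
    filter_upwards [h, eventually_gt_atTop 0] with j hj hj0
    exact ((lt_div_iff₀ (by exact_mod_cast hj0)).mp hj).le
  have ha_up : ∀ ε > 0, ∀ᶠ j : ℕ in atTop, Real.log (Nat.card (Φ.I j)) ≤ (ap + ε) * j := by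
    intro ε hε
    have h := eventually_lt_of_limsup_lt (b := ap + ε) (by rw [hlap]; linarith) hbdda
    filter_upwards [h, eventually_gt_atTop 0] with j hj hj0
    exact ((div_lt_iff₀ (by exact_mod_cast hj0)).mp hj).le
  have hb_low : ∀ ε > 0, ∀ᶠ j : ℕ in atTop, (bm - ε) * j ≤ Real.log (1 / Φ.cmax j) := by
    intro ε hε
    have h := eventually_lt_of_lt_liminf (b := bm - ε) (by rw [hlbm]; linarith)
      (isBoundedUnder_of ⟨0, fun n => div_nonneg (Φ.log_inv_cmax_nonneg n) (Nat.cast_nonneg n)⟩)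
    filter_upwards [h, eventually_gt_atTop 0] with j hj hj0
    exact ((lt_div_iff₀ (by exact_mod_cast hj0)).mp hj).le
  have hb_up : ∀ ε > 0, ∀ᶠ j : ℕ in atTop, Real.log (1 / Φ.cmax j) ≤ (bp + ε) * j := by
    intro ε hε
    have h := eventually_lt_of_limsup_lt (b := bp + ε) (by rw [hlbp]; linarith) hbddb
    filter_upwards [h, eventually_gt_atTop 0] with j hj hj0
    exact (Φ.log_cmax_le_cmin j).trans ((div_lt_iff₀ (by exact_mod_cast hj0)).mp hj).le
  have hrho : ∀ ε > 0, ∀ᶠ j : ℕ in atTop, Real.log (Φ.ρ j) ≤ ε * j := by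
    intro ε hε
    filter_upwards [hbal.eventually (gt_mem_nhds hε), eventually_gt_atTop 0] with j hj hj0
    exact ((div_lt_iff₀ (by exact_mod_cast hj0)).mp hj).le
  constructor
  · refine le_of_forall_lt fun c hc => ?_
    obtain ⟨s, hcs, hs⟩ := ENNReal.lt_iff_exists_nnreal_btwn.mp hc
    refine hcs.trans_le (le_dimH_of_hausdorffMeasure_ne_zero ?_)
    have hs' : (s : ℝ) < am / bp := by
      rw [← ENNReal.ofReal_coe_nnreal, ENNReal.ofReal_lt_ofReal_iff'] at hs
      exact hs.1
    have hs0 : (0 : ℝ) ≤ s := s.2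
    have hbp : 0 < bp := by
      by_contra hneg
      push Not at hneg
      have := div_nonpos_of_nonneg_of_nonpos ham.le hneg
      linarith
    rw [lt_div_iff₀ hbp] at hs'
    refine Φ.lower_aux s (bp + 1) hs0 (by linarith) (hb_up 1 one_pos) ?_
    have hden : (0 : ℝ) < 2 * (1 + s + d) := by positivity
    set ε := (am - s * bp) / (2 * (1 + s + d)) with hε
    have hεpos : 0 < ε := div_pos (by linarith) hden
    have hεeq : ε * (2 * (1 + s + d)) = am - s * bp := by
      rw [hε]; field_simp
    refine NCIFS.tendsto_of_linear _ ((am - s * bp) / 2) (by linarith) ?_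
    filter_upwards [ha_low ε hεpos, hb_up ε hεpos, hrho ε hεpos] with j h1 h2 h3
    have h2' := mul_le_mul_of_nonneg_left h2 hs0
    have h3' := mul_le_mul_of_nonneg_left h3 (Nat.cast_nonneg (α := ℝ) d)
    have e : (am - s * bp) / 2 * j = (am - ε) * j - s * ((bp + ε) * j) - d * (ε * j) := by
      linear_combination (1/2 * (j : ℝ)) * hεeq
    linarith
  · refine le_of_forall_gt fun c hc => ?_
    obtain ⟨t, ht, htc⟩ := ENNReal.lt_iff_exists_nnreal_btwn.mp hc
    refine lt_of_le_of_lt (dimH_le_of_hausdorffMeasure_ne_top ?_) htc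
    have ht' : ap / bm < (t : ℝ) := by
      rw [← ENNReal.ofReal_coe_nnreal, ENNReal.ofReal_lt_ofReal_iff'] at ht
      exact ht.1
    have ht0 : (0 : ℝ) ≤ t := t.2
    rw [div_lt_iff₀ hbm] at ht'
    rw [Φ.upper_aux t ht0]
    · exact ENNReal.zero_ne_top
    have hden : (0 : ℝ) < 2 * (1 + t) := by positivity
    set ε := (t * bm - ap) / (2 * (1 + t)) with hε
    have hεpos : 0 < ε := div_pos (by linarith) hden
    have hεeq : ε * (2 * (1 + t)) = t * bm - ap := by
      rw [hε]; field_simp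
    refine NCIFS.tendsto_of_linear _ ((t * bm - ap) / 2) (by linarith) ?_
    filter_upwards [ha_up ε hεpos, hb_low ε hεpos] with j h1 h2
    have h2' := mul_le_mul_of_nonneg_left h2 ht0
    have e : (t * bm - ap) / 2 * j = t * ((bm - ε) * j) - (ap + ε) * j := by
      linear_combination (1/2 * (j : ℝ)) * hεeq
    linarith
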